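/- Let X ⊆ ℝⁿ be a nonempty closed convex set, f : ℝⁿ → ℝ a convex function, M > 0 and γ > 0, and let F(x) = f(π_X(x)) + M·‖x − π_X(x)‖^γ. Then F has no local minima different from the solutions of the constrained problem: every local minimizer x̄ of F over ℝⁿ belongs to X and is a global minimizer of f over X. -/

import Mathlib

/-!
Let `x ∉ X` and let `p` be a point of `X` nearest to `x`. If `y ≠ x` lies on the segment `[x, p]`,
then any `q ∈ X` with `‖y - q‖ ≤ ‖y - p‖` turns the triangle inequality
`‖x - q‖ ≤ ‖x - y‖ + ‖y - q‖` into an equality, and strict convexity of the norm forces `q = p`. So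
moving `x` towards its projection leaves the projection unchanged and only decreases the penalty: a
point outside `X` is never a local minimizer of `F`. On `X` the functions `F` and `f` differ by a
constant, so a local minimizer of `F` is a local minimizer of the convex function `f` on `X`, hence
a global one.
-/

open Filter Set
open scoped Topology

section Definitions

variable {α : Type*} [PseudoMetricSpace α]

/-- `π` is a metric projection onto `X`: it sends each point to a point of `X` nearest to it. This
is a property of `π` rather than a function of `X` because a nearest point need neither exist nor
be unique for a general `X`. -/
structure IsMetricProjection (X : Set α) (π : α → α) : Prop where
  apply_mem (x : α) : π x ∈ X
  dist_apply_le (x : α) {y : α} (hy : y ∈ X) : dist x (π x) ≤ dist x y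

/-- The projective penalty function `x ↦ f (π x) + φ (dist x (π x))` of an objective `f` for the
constraint set onto which `π` projects. The profile `φ` of the penalty is arbitrary; the power
penalty is `φ r = M * r ^ γ`. -/
def projectivePenalty (f : α → ℝ) (φ : ℝ → ℝ) (π : α → α) (x : α) : ℝ :=
  f (π x) + φ (dist x (π x))

end Definitions

section MetricSpace

variable {α : Type*} [MetricSpace α] {X : Set α} {π : α → α}

lemma IsMetricProjection.apply_of_mem (hπ : IsMetricProjection X π) {x : α} (hx : x ∈ X) :
    π x = x :=
  (dist_le_zero.mp <| by simpa only [dist_self] using hπ.dist_apply_le x hx).symm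

lemma IsMetricProjection.projectivePenalty_of_mem (hπ : IsMetricProjection X π) (f : α → ℝ)
    (φ : ℝ → ℝ) {x : α} (hx : x ∈ X) : projectivePenalty f φ π x = f x + φ 0 := by
  rw [projectivePenalty, hπ.apply_of_mem hx, dist_self]

lemma IsMetricProjection.isLocalMinOn_of_projectivePenalty (hπ : IsMetricProjection X π)
    {f : α → ℝ} {φ : ℝ → ℝ} {x : α} (hx : x ∈ X)
    (hmin : IsLocalMinOn (projectivePenalty f φ π) X x) : IsLocalMinOn f X x := by
  filter_upwards [hmin, self_mem_nhdsWithin] with y hle hy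
  rwa [hπ.projectivePenalty_of_mem f φ hx, hπ.projectivePenalty_of_mem f φ hy,
    add_le_add_iff_right] at hle

end MetricSpace

section Segments

variable {V P : Type*} [NormedAddCommGroup V] [NormedSpace ℝ V] [MetricSpace P]
  [NormedAddTorsor V P]

lemma dist_lt_dist_of_wbtw_of_ne {x y p : P} (hxyp : Wbtw ℝ x y p) (hyx : y ≠ x) :
    dist y p < dist x p := by
  rw [← hxyp.dist_add_dist]
  exact lt_add_of_pos_left _ (dist_pos.mpr hyx.symm)

lemma frequently_wbtw_and_ne {x p : P} (hxp : x ≠ p) : ∃ᶠ y in 𝓝 x, Wbtw ℝ x y p ∧ y ≠ x := by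
  have hlim : Tendsto (AffineMap.lineMap x p : ℝ → P) (𝓝[>] 0) (𝓝 x) :=
    (AffineMap.lineMap_continuous.tendsto' 0 x (AffineMap.lineMap_apply_zero x p)).mono_left
      nhdsWithin_le_nhds
  refine hlim.frequently (Eventually.frequently ?_)
  filter_upwards [Ioc_mem_nhdsGT (zero_lt_one' ℝ)] with t ht
  exact ⟨wbtw_lineMap_iff.mpr (.inr (Ioc_subset_Icc_self ht)),
    fun h ↦ (AffineMap.lineMap_eq_left_iff.mp h).elim hxp ht.1.ne'⟩

variable [StrictConvexSpace ℝ V]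

lemma eq_of_wbtw_of_dist_le {x y p q : P} (hxyp : Wbtw ℝ x y p) (hyx : y ≠ x)
    (hx : dist x p ≤ dist x q) (hy : dist y q ≤ dist y p) : q = p := by
  have hp : dist x y + dist y p = dist x p := hxyp.dist_add_dist
  have hq : dist x q ≤ dist x y + dist y q := dist_triangle x y q
  have hxyq : Wbtw ℝ x y q := dist_add_dist_eq_iff.mp (by linarith)
  have hray : SameRay ℝ (q -ᵥ x) (p -ᵥ x) :=
    hxyq.sameRay_vsub_left.symm.trans hxyp.sameRay_vsub_left
      fun h ↦ absurd (vsub_eq_zero_iff_eq.mp h) hyx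
  have hnorm : ‖q -ᵥ x‖ = ‖p -ᵥ x‖ := by
    rw [← dist_eq_norm_vsub V, ← dist_eq_norm_vsub V, dist_comm q, dist_comm p]
    linarith
  exact vsub_left_cancel (hray.eq_of_norm_eq hnorm)

variable {X : Set P} {π : P → P}

lemma IsMetricProjection.apply_eq_of_wbtw (hπ : IsMetricProjection X π) {x y : P}
    (hy : Wbtw ℝ x y (π x)) : π y = π x := by
  obtain rfl | hyx := eq_or_ne y x
  · rfl
  · exact eq_of_wbtw_of_dist_le hy hyx (hπ.dist_apply_le x (hπ.apply_mem y))
      (hπ.dist_apply_le y (hπ.apply_mem x))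

lemma IsMetricProjection.projectivePenalty_lt_of_wbtw (hπ : IsMetricProjection X π)
    (f : P → ℝ) {φ : ℝ → ℝ} (hφ : StrictMonoOn φ (Ici 0)) {x y : P} (hy : Wbtw ℝ x y (π x))
    (hyx : y ≠ x) :
    projectivePenalty f φ π y < projectivePenalty f φ π x := by
  rw [projectivePenalty, projectivePenalty, hπ.apply_eq_of_wbtw hy, add_lt_add_iff_left]
  exact hφ dist_nonneg dist_nonneg (dist_lt_dist_of_wbtw_of_ne hy hyx)

end Segments

section LocalMinimizers

variable {E : Type*} [NormedAddCommGroup E] [NormedSpace ℝ E] [StrictConvexSpace ℝ E]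
  {X : Set E} {f : E → ℝ} {φ : ℝ → ℝ} {π : E → E} {x : E}

lemma IsMetricProjection.mem_of_isLocalMin_projectivePenalty (hπ : IsMetricProjection X π)
    (hφ : StrictMonoOn φ (Ici 0)) (hmin : IsLocalMin (projectivePenalty f φ π) x) : x ∈ X := by
  by_contra hx
  have hne : x ≠ π x := fun h ↦ hx (h ▸ hπ.apply_mem x)
  obtain ⟨y, ⟨hy, hyx⟩, hle⟩ := ((frequently_wbtw_and_ne hne).and_eventually hmin).exists
  exact (hπ.projectivePenalty_lt_of_wbtw f hφ hy hyx).not_ge hle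

theorem projective_penalty_local_minimizer_general (hf : ConvexOn ℝ X f)
    (hφ : StrictMonoOn φ (Ici 0)) (hπ : IsMetricProjection X π)
    (hmin : IsLocalMin (projectivePenalty f φ π) x) : x ∈ X ∧ IsMinOn f X x := by
  have hx : x ∈ X := hπ.mem_of_isLocalMin_projectivePenalty hφ hmin
  exact ⟨hx, .of_isLocalMinOn_of_convexOn hx
    (hπ.isLocalMinOn_of_projectivePenalty hx (hmin.on X)) hf⟩

end LocalMinimizers

lemma strictMonoOn_const_mul_rpow {M γ : ℝ} (hM : 0 < M) (hγ : 0 < γ) :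
    StrictMonoOn (fun r : ℝ ↦ M * r ^ γ) (Ici 0) :=
  (strictMono_mul_left_of_pos hM).comp_strictMonoOn
    (Real.strictMonoOn_rpow_Ici_of_exponent_pos hγ)

/-- For convex `f`, the projective exact penalty function
`F x = f (π_X x) + M * ‖x - π_X x‖ ^ γ` has no local minima different from the
solutions of the constrained problem: every local minimizer `x̄` of `F` belongs
to `X` and is a global minimizer of `f` over `X`. -/
theorem projective_penalty_local_minimizer
    {n : ℕ} (X : Set (EuclideanSpace ℝ (Fin n)))
    (hXne : X.Nonempty) (hXcl : IsClosed X) (hXconv : Convex ℝ X)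
    (f : EuclideanSpace ℝ (Fin n) → ℝ) (hf : ConvexOn ℝ Set.univ f)
    (M γ : ℝ) (hM : 0 < M) (hγ : 0 < γ)
    (π : EuclideanSpace ℝ (Fin n) → EuclideanSpace ℝ (Fin n))
    (hπmem : ∀ x, π x ∈ X)
    (hπmin : ∀ x, ∀ y ∈ X, ‖x - π x‖ ≤ ‖x - y‖)
    (F : EuclideanSpace ℝ (Fin n) → ℝ)
    (hF : ∀ x, F x = f (π x) + M * ‖x - π x‖ ^ γ)
    (xbar : EuclideanSpace ℝ (Fin n))
    (hloc : ∃ ε > 0, ∀ y, ‖y - xbar‖ < ε → F xbar ≤ F y) :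
    xbar ∈ X ∧ ∀ y ∈ X, f xbar ≤ f y := by
  have hπ : IsMetricProjection X π := ⟨hπmem, by simpa only [dist_eq_norm] using hπmin⟩
  have hFeq : F = projectivePenalty f (fun r ↦ M * r ^ γ) π :=
    funext fun x ↦ by rw [hF, projectivePenalty, dist_eq_norm]
  have hmin : IsLocalMin F xbar :=
    Metric.eventually_nhds_iff.mpr (by simpa only [dist_eq_norm] using hloc)
  exact projective_penalty_local_minimizer_general (hf.subset (subset_univ X) hXconv)
    (strictMonoOn_const_mul_rpow hM hγ) hπ (hFeq ▸ hmin)
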